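/- Suppose a group G has a Følner net. Then every continuous affine action of G on a nonempty convex compact subset C of a Hausdorff topological real vector space E has a fixed point: there exists c ∈ C with c·g = c for all g ∈ G. (Combined with the Følner characterisation, this is the Markov–Kakutani/Day fixed point property of amenable groups.) -/

import Mathlib

open scoped Classical

universe u v

/-!
Fix `x ∈ C` and let `c i` be the average of `x·f` over `f ∈ F i`. Since `g` acts affinely,
`c i · g` is the average of `x·(f g)`. In the difference `c i · g - c i` all but `k` terms of each
sum cancel, where `k` is the cardinality of `F i \ F i g`, so that by convexity the difference lies
in `(k / |F i|) • (C - C)`. As `C - C` is bounded, `c i · g - c i` tends to `0`, and any cluster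
point of `c` in the compact set `C` is fixed by every `g`.
-/

section Sums

open scoped Pointwise

variable {𝕜 ι E : Type*} [Field 𝕜] [LinearOrder 𝕜] [IsStrictOrderedRing 𝕜] [AddCommGroup E]
  [Module 𝕜 E] {C : Set E}

theorem sum_mem_card_smul_of_convex (hC : Convex 𝕜 C) (hne : C.Nonempty) (s : Finset ι)
    {p : ι → E} (hp : ∀ i ∈ s, p i ∈ C) :
    ∑ i ∈ s, p i ∈ (s.card : 𝕜) • C := by
  induction s using Finset.cons_induction with
  | empty => simp [Set.zero_smul_set hne]
  | cons a s ha ih =>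
    rw [Finset.forall_mem_cons] at hp
    rw [Finset.sum_cons, Finset.card_cons, Nat.cast_succ, add_comm (s.card : 𝕜),
      hC.add_smul zero_le_one s.card.cast_nonneg, one_smul]
    exact Set.add_mem_add hp.1 (ih hp.2)

theorem average_mem_of_convex (hC : Convex 𝕜 C) {s : Finset ι} (hs : s.Nonempty) {p : ι → E}
    (hp : ∀ i ∈ s, p i ∈ C) :
    (s.card : 𝕜)⁻¹ • ∑ i ∈ s, p i ∈ C := by
  obtain ⟨i, hi⟩ := hs
  rw [← Set.mem_smul_set_iff_inv_smul_mem₀ (Nat.cast_ne_zero.mpr (Finset.card_ne_zero_of_mem hi))]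
  exact sum_mem_card_smul_of_convex hC ⟨p i, hp i hi⟩ s hp

theorem exists_sum_comp_sub_sum_eq {α β M : Type*} [DecidableEq α] [AddCommGroup M]
    {s : Finset β} {t : Finset α} (hst : s.card = t.card) (f : β → α) (p : α → M) :
    ∃ r ⊆ s, r.card = (t \ s.image f).card ∧
      ∑ b ∈ s, p (f b) - ∑ a ∈ t, p a = ∑ b ∈ r, p (f b) - ∑ a ∈ t \ s.image f, p a := by
  have hsurj : Set.SurjOn f s (t ∩ s.image f : Finset α) := fun a ha ↦ by
    simpa using Finset.inter_subset_right (Finset.mem_coe.mp ha)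
  -- `f` need not be injective on `s`: only the terms over a section `u` of `f` cancel.
  obtain ⟨u, hu, hinj, himage⟩ := Finset.exists_subset_injOn_image_eq_of_surjOn _ _ hsurj
  have hus : u ⊆ s := Finset.coe_subset.mp hu
  refine ⟨s \ u, Finset.sdiff_subset, ?_, ?_⟩
  · have hcard : u.card = (t ∩ s.image f).card := by
      rw [← himage, Finset.card_image_of_injOn hinj]
    have hcard_s := Finset.card_sdiff_add_card_eq_card hus
    have hcard_t := Finset.card_sdiff_add_card_inter t (s.image f)
    lia
  · have hsum : ∑ b ∈ u, p (f b) = ∑ a ∈ t ∩ s.image f, p a := by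
      rw [← himage, Finset.sum_image hinj]
    rw [← Finset.sum_sdiff hus, ← Finset.sum_inter_add_sum_sdiff t (s.image f), hsum]
    abel

end Sums

section Affine

open scoped Pointwise

/-- Affine maps from a convex subset `C` of a module to a module. The convex combination of `x` and
`y` is represented by a point `z` of the subtype `C`, so that the definition does not depend on a
proof that `C` is convex. -/
def PreservesConvexCombinations (𝕜 : Type*) {E E' : Type*} [Ring 𝕜] [PartialOrder 𝕜]
    [AddCommMonoid E] [SMul 𝕜 E] [AddCommMonoid E'] [SMul 𝕜 E'] {C : Set E} (φ : C → E') : Prop :=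
  ∀ (x y z : C) (t : 𝕜), 0 ≤ t → t ≤ 1 → (z : E) = t • (x : E) + (1 - t) • (y : E) →
    φ z = t • φ x + (1 - t) • φ y

namespace PreservesConvexCombinations

theorem convex_range_graph {𝕜 E E' : Type*} [Ring 𝕜] [PartialOrder 𝕜] [IsOrderedAddMonoid 𝕜]
    [AddCommMonoid E] [SMul 𝕜 E] [AddCommMonoid E'] [SMul 𝕜 E'] {C : Set E} {φ : C → E'}
    (hφ : PreservesConvexCombinations 𝕜 φ) (hC : Convex 𝕜 C) :
    Convex 𝕜 (Set.range fun x : C ↦ ((x : E), φ x)) := by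
  rintro _ ⟨x, rfl⟩ _ ⟨y, rfl⟩ a b ha hb hab
  obtain rfl : b = 1 - a := eq_sub_of_add_eq' hab
  exact ⟨⟨_, hC x.2 y.2 ha hb hab⟩, Prod.ext rfl (hφ x y _ a ha (sub_nonneg.mp hb) rfl)⟩

variable {𝕜 E E' : Type*} [Field 𝕜] [LinearOrder 𝕜] [IsStrictOrderedRing 𝕜]
  [AddCommGroup E] [Module 𝕜 E] [AddCommGroup E'] [Module 𝕜 E'] {C : Set E}

theorem map_weighted_sum {φ : C → E'} (hφ : PreservesConvexCombinations 𝕜 φ) (hC : Convex 𝕜 C)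
    {ι : Type*} {s : Finset ι} {w : ι → 𝕜} (hw : ∀ i ∈ s, 0 ≤ w i) (hw_sum : ∑ i ∈ s, w i = 1)
    (p : ι → C) {z : C} (hz : (z : E) = ∑ i ∈ s, w i • (p i : E)) :
    φ z = ∑ i ∈ s, w i • φ (p i) := by
  obtain ⟨y, hy⟩ := (hφ.convex_range_graph hC).sum_mem hw hw_sum fun i _ ↦ ⟨p i, rfl⟩
  simp only [Prod.smul_mk, Prod.ext_iff, Prod.fst_sum, Prod.snd_sum] at hy
  obtain rfl : y = z := Subtype.ext (hy.1.trans hz.symm)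
  exact hy.2

theorem map_average {φ : C → E'} (hφ : PreservesConvexCombinations 𝕜 φ) (hC : Convex 𝕜 C)
    {ι : Type*} {s : Finset ι} (hs : s.Nonempty) (p : ι → C) {z : C}
    (hz : (z : E) = (s.card : 𝕜)⁻¹ • ∑ i ∈ s, (p i : E)) :
    φ z = (s.card : 𝕜)⁻¹ • ∑ i ∈ s, φ (p i) := by
  rw [Finset.smul_sum] at hz ⊢
  exact hφ.map_weighted_sum hC (fun _ _ ↦ by positivity) (by simp [hs.ne_empty]) p hz

theorem map_average_sub_average_mem {φ : C → C}
    (hφ : PreservesConvexCombinations 𝕜 fun x ↦ (φ x : E)) (hC : Convex 𝕜 C)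
    {ι : Type*} [DecidableEq ι] {s : Finset ι} (hs : s.Nonempty) {f : ι → ι} {p : ι → C}
    (hp : ∀ i, φ (p i) = p (f i)) {z : C}
    (hz : (z : E) = (s.card : 𝕜)⁻¹ • ∑ i ∈ s, (p i : E)) :
    (φ z - z : E) ∈ ((s \ s.image f).card / s.card : 𝕜) • (C - C) := by
  have hne : C.Nonempty := ⟨z, z.2⟩
  obtain ⟨r, -, hr, hsum⟩ := exists_sum_comp_sub_sum_eq (s := s) rfl f fun i ↦ (p i : E)
  have hdiff : (φ z - z : E) =
      (s.card : 𝕜)⁻¹ • (∑ i ∈ r, (p (f i) : E) - ∑ i ∈ s \ s.image f, (p i : E)) := by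
    rw [hφ.map_average hC hs p hz, hz, ← smul_sub, ← hsum]
    simp only [hp]
  obtain ⟨a, ha, hsum_r⟩ := sum_mem_card_smul_of_convex hC hne r fun i _ ↦ (p (f i)).2
  obtain ⟨b, hb, hsum_sdiff⟩ :=
    sum_mem_card_smul_of_convex hC hne (s \ s.image f) fun i _ ↦ (p i).2
  refine ⟨a - b, Set.sub_mem_sub ha hb, ?_⟩
  simp only [hdiff, ← hsum_r, ← hsum_sdiff, hr, div_eq_inv_mul, mul_smul, smul_sub]

end PreservesConvexCombinations

end Affine

section Limits

open Filter Topology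
open scoped Pointwise

theorem tendsto_zero_of_mem_smul_isVonNBounded {𝕜 E ι : Type*} [NormedField 𝕜] [AddCommGroup E]
    [Module 𝕜 E] [TopologicalSpace E] {S : Set E} (hS : Bornology.IsVonNBounded 𝕜 S)
    {l : Filter ι} {r : ι → 𝕜} (hr : Tendsto r l (𝓝 0)) {d : ι → E} (hd : ∀ i, d i ∈ r i • S) :
    Tendsto d l (𝓝 0) := by
  choose x hxS hx using hd
  exact (hS.smul_tendsto_zero (.of_forall hxS) hr).congr hx

theorem eq_of_mapClusterPt_of_tendsto_sub {X E ι : Type*} [TopologicalSpace X] [AddGroup E]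
    [TopologicalSpace E] [ContinuousSub E] [T2Space E] {l : Filter ι} {c : ι → X} {y : X}
    (hy : MapClusterPt y l c) {φ ψ : X → E} (hφ : ContinuousAt φ y) (hψ : ContinuousAt ψ y)
    (hlim : Tendsto (fun i ↦ φ (c i) - ψ (c i)) l (𝓝 0)) : φ y = ψ y := by
  have hcluster : ClusterPt (φ y - ψ y) (𝓝 0) :=
    (hy.continuousAt_comp (hφ.sub hψ)).clusterPt.mono hlim
  exact sub_eq_zero.mp (eq_of_nhds_neBot hcluster)

end Limits

section Folner

open Filter Topology

/-- Right Følner families of finite subsets of `G`, along a filter `l` on the index type. A Følner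
net is such a family indexed by a nonempty directed set, with `l = atTop`. Nonemptiness of the sets
excludes the junk value `0 / 0 = 0` of the ratio. -/
structure IsRightFolner {G ι : Type*} [Mul G] [DecidableEq G] (l : Filter ι)
    (F : ι → Finset G) : Prop where
  nonempty : ∀ i, (F i).Nonempty
  tendsto_card_sdiff_div : ∀ g : G,
    Tendsto (fun i ↦ ((F i \ (F i).image (· * g)).card : ℝ) / (F i).card) l (𝓝 0)

theorem fixedPoint_of_folnerNet_general {G ι : Type*} [Mul G] [DecidableEq G] {l : Filter ι}
    [l.NeBot] {F : ι → Finset G} (hF : IsRightFolner l F)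
    {E : Type*} [AddCommGroup E] [Module ℝ E] [TopologicalSpace E] [T2Space E]
    [IsTopologicalAddGroup E] [ContinuousSMul ℝ E]
    {C : Set E} (hCne : C.Nonempty) (hCconv : Convex ℝ C) (hCcomp : IsCompact C)
    {act : G → C → C} (hmul : ∀ (g g' : G) (x : C), act (g * g') x = act g' (act g x))
    (hcont : ∀ g, Continuous (act g))
    (haffine : ∀ g, PreservesConvexCombinations ℝ fun x ↦ (act g x : E)) :
    ∃ c : C, ∀ g, act g c = c := by
  have hbdd : Bornology.IsVonNBounded ℝ C := hCcomp.isVonNBounded ℝ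
  have : CompactSpace C := isCompact_iff_compactSpace.mp hCcomp
  obtain ⟨x, hx⟩ := hCne
  let orbit (f : G) : C := act f ⟨x, hx⟩
  let c (i : ι) : C := ⟨_, average_mem_of_convex hCconv (hF.nonempty i) fun f _ ↦ (orbit f).2⟩
  obtain ⟨y, hy⟩ : ∃ y, MapClusterPt y l c := exists_clusterPt_of_compactSpace _
  refine ⟨y, fun g ↦ Subtype.ext ?_⟩
  have hdisp (i : ι) := (haffine g).map_average_sub_average_mem hCconv (hF.nonempty i)
    (p := orbit) (fun f ↦ (hmul f g _).symm) (z := c i) rfl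
  have hlim : Tendsto (fun i ↦ (act g (c i) - c i : E)) l (𝓝 0) :=
    tendsto_zero_of_mem_smul_isVonNBounded (hbdd.sub hbdd) (hF.tendsto_card_sdiff_div g) hdisp
  exact eq_of_mapClusterPt_of_tendsto_sub hy
    (continuous_subtype_val.comp (hcont g)).continuousAt continuousAt_subtype_val hlim

end Folner

/-- If a group `G` has a Følner net, then every continuous affine (right) action of `G`
on a nonempty convex compact subset `C` of a Hausdorff topological real vector space `E`
has a fixed point. Here `act g : C → C` denotes the map `x ↦ x·g`, so that
`x·1 = x` and `x·(gg') = (x·g)·g'`, each `act g` is continuous, and `act g` is affine: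
it preserves convex combinations (computed in `E`). -/
theorem fixedPoint_of_folnerNet {G : Type u} [Group G]
    (hFolner : ∃ (I : Type u) (_ : Preorder I), Nonempty I ∧ IsDirected I (· ≤ ·) ∧
      ∃ F : I → Finset G, (∀ i, (F i).Nonempty) ∧
        ∀ g : G, Filter.Tendsto
          (fun i => (((F i) \ (F i).image (· * g)).card : ℝ) / ((F i).card : ℝ))
          Filter.atTop (nhds 0))
    {E : Type v} [AddCommGroup E] [Module ℝ E] [TopologicalSpace E] [T2Space E]
    [IsTopologicalAddGroup E] [ContinuousSMul ℝ E]
    (C : Set E) (hCne : C.Nonempty) (hCconv : Convex ℝ C) (hCcomp : IsCompact C)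
    (act : G → C → C)
    (hone : ∀ x : C, act 1 x = x)
    (hmul : ∀ (g g' : G) (x : C), act (g * g') x = act g' (act g x))
    (hcont : ∀ g : G, Continuous (act g))
    (haffine : ∀ (g : G) (x y z : C) (t : ℝ), 0 ≤ t → t ≤ 1 →
      (z : E) = t • (x : E) + (1 - t) • (y : E) →
      ((act g z : E) = t • ((act g x : E)) + (1 - t) • ((act g y : E)))) :
    ∃ c : C, ∀ g : G, act g c = c := by
  obtain ⟨I, _, hne, hdir, F, hFne, hFlim⟩ := hFolner
  exact fixedPoint_of_folnerNet_general (l := .atTop) ⟨hFne, hFlim⟩ hCne hCconv hCcomp hmul hcont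
    haffine
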